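/- arXiv:1704.03542 — 2 statements merged into one kernel-verified Lean document; each statement's English description precedes it below -/
import Mathlib

section
/- Let n ≥ 2, let 0 < γ₁, γ₂ < 1, let Π = I₁ × I₂ be a rectangle with midpoint d = (d₁, d₂), d₁ ≠ d₂, and side lengths μ₁I_i = c₆ Q^{−γ_i} (i = 1, 2), where μ₁ denotes one-dimensional Lebesgue measure. Set c₇ = 2^{3n+8} n² ρₙ(d₁) ρₙ(d₂) |d₁ − d₂|^{−1}. Then for all sufficiently large Q (Q > Q₀(n, γ, d)) one has #(Ã²ₙ(Q) ∩ Π) < c₇ · Qⁿ · μ₂Π, where μ₂Π = c₆² Q^{−γ₁−γ₂} is the area of Π. -/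
/-- `(α₁, α₂)` is an algebraic integer point of degree `n` and height at most `Q`:
`α₁, α₂` are real roots of a common monic irreducible integer polynomial of degree `n`
all of whose coefficients are bounded by `Q` in absolute value. -/
def IsAlgebraicIntegerPoint (n : ℕ) (Q : ℝ) (α : ℝ × ℝ) : Prop :=
  ∃ P : Polynomial ℤ, P.Monic ∧ Irreducible P ∧ P.natDegree = n ∧
    (∀ i, (|P.coeff i| : ℝ) ≤ Q) ∧
    Polynomial.aeval α.1 P = 0 ∧ Polynomial.aeval α.2 P = 0

open Polynomial in
lemma aux_value_bound (n : ℕ) (Q d α δ : ℝ) (hd : d ≠ 0) (hδ : δ ≤ 1) (P : ℤ[X])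
    (hP : P.natDegree = n) (hc : ∀ i, (|P.coeff i| : ℝ) ≤ Q) (hα : aeval α P = 0)
    (h : |d - α| ≤ δ) :
    |aeval d P| ≤ n * (((|d| + 1) ^ (n + 1) - 1) / |d|) * Q * δ := by
  have hQ : 0 ≤ Q := le_trans (abs_nonneg _) (hc 0)
  have hδ0 : 0 ≤ δ := le_trans (abs_nonneg _) h
  have hpos : 0 < |d| := abs_pos.mpr hd
  have hgeom : ∑ i ∈ Finset.range (n + 1), (|d| + 1) ^ i = ((|d| + 1) ^ (n + 1) - 1) / |d| := by
    rw [geom_sum_eq (by linarith)]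
    congr 1
    ring
  have hmax : max |d| |α| ≤ |d| + 1 := by
    apply max_le (by linarith)
    have := abs_sub_abs_le_abs_sub α d
    rw [abs_sub_comm] at this
    linarith
  have hmax0 : 0 ≤ max |d| |α| := le_trans (abs_nonneg _) (le_max_left _ _)
  have e : aeval d P = ∑ i ∈ Finset.range (n + 1), (P.coeff i : ℝ) * (d ^ i - α ^ i) := by
    have h1 := aeval_eq_sum_range (p := P) d
    have h2 := aeval_eq_sum_range (p := P) α
    rw [hα] at h2
    simp only [hP, zsmul_eq_mul] at h1 h2
    simp only [mul_sub, Finset.sum_sub_distrib]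
    rw [h1, ← h2, sub_zero]
  rw [e, ← hgeom]
  calc _ ≤ ∑ i ∈ Finset.range (n + 1), |(P.coeff i : ℝ) * (d ^ i - α ^ i)| :=
        Finset.abs_sum_le_sum_abs _ _
    _ ≤ ∑ i ∈ Finset.range (n + 1), Q * (δ * (n * (|d| + 1) ^ i)) := by
        apply Finset.sum_le_sum
        intro i hi
        rw [abs_mul]
        apply mul_le_mul (hc i) _ (abs_nonneg _) hQ
        have hin : (i : ℝ) ≤ n := by
          have := Finset.mem_range.mp hi
          exact_mod_cast Nat.lt_succ_iff.mp this
        calc _ ≤ |d - α| * i * max |d| |α| ^ (i - 1) := abs_pow_sub_pow_le _ _ _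
          _ ≤ δ * n * (|d| + 1) ^ i := by
            have h3 : max |d| |α| ^ (i - 1) ≤ (|d| + 1) ^ i :=
              (pow_le_pow_left₀ hmax0 hmax _).trans
                (pow_le_pow_right₀ (by linarith) (Nat.sub_le _ _))
            gcongr
          _ = _ := by ring
    _ = _ := by
        rw [← Finset.mul_sum, ← Finset.mul_sum, ← Finset.mul_sum]
        ring

lemma aux_interval (c r : ℝ) (hr : 1 / 2 ≤ r) :
    ∃ s : Finset ℤ, (s.card : ℝ) ≤ 4 * r ∧ ∀ x : ℤ, |(x : ℝ) + c| ≤ r → x ∈ s := by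
  refine ⟨Finset.Icc ⌈-c - r⌉ ⌊-c + r⌋, ?_, ?_⟩
  · rw [Int.card_Icc]
    have h1 := Int.floor_le (-c + r)
    have h2 := Int.le_ceil (-c - r)
    rcases le_total 0 (⌊-c + r⌋ + 1 - ⌈-c - r⌉) with h | h
    · have h3 : (((⌊-c + r⌋ + 1 - ⌈-c - r⌉).toNat : ℤ) : ℝ) = ((⌊-c + r⌋ + 1 - ⌈-c - r⌉ : ℤ) : ℝ) := by
        rw [Int.toNat_of_nonneg h]
      push_cast at h3
      rw [h3]
      linarith
    · rw [Int.toNat_of_nonpos h]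
      push_cast
      linarith
  · intro x hx
    rw [abs_le] at hx
    rw [Finset.mem_Icc, Int.ceil_le, Int.le_floor]
    constructor <;> linarith [hx.1, hx.2]

/-- The lattice point count in a parallelogram. -/
lemma aux_lattice (d₁ d₂ c₁ c₂ M₁ M₂ : ℝ) (hd : d₁ ≠ d₂) (h₁ : 1 / 2 ≤ M₁) (h₂ : 1 / 2 ≤ M₂)
    (h₃ : |d₁ - d₂| / 2 ≤ M₁ + M₂) :
    ∃ s : Finset (ℤ × ℤ), (s.card : ℝ) ≤ 32 * (M₁ * M₂) / |d₁ - d₂| ∧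
      ∀ x y : ℤ, |(y : ℝ) + (x * d₁ + c₁)| ≤ M₁ → |(y : ℝ) + (x * d₂ + c₂)| ≤ M₂ →
        (x, y) ∈ s := by
  wlog hM : M₁ ≤ M₂ generalizing d₁ d₂ c₁ c₂ M₁ M₂
  · obtain ⟨s, hs, hs'⟩ := this d₂ d₁ c₂ c₁ M₂ M₁ hd.symm h₂ h₁
      (by rw [abs_sub_comm]; linarith) (by linarith)
    refine ⟨s, ?_, fun x y hx hy => hs' x y hy hx⟩
    rw [abs_sub_comm, mul_comm M₁]
    exact hs
  have hD : 0 < |d₁ - d₂| := abs_pos.mpr (sub_ne_zero.mpr hd)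
  obtain ⟨s, hs, hs'⟩ := aux_interval ((c₁ - c₂) / (d₁ - d₂)) ((M₁ + M₂) / |d₁ - d₂|)
    (by rw [le_div_iff₀ hD]; linarith)
  choose t ht ht' using fun x : ℤ => aux_interval (x * d₁ + c₁) M₁ h₁
  classical
  refine ⟨s.biUnion fun x => (t x).image fun y => (x, y), ?_, ?_⟩
  · calc (((s.biUnion fun x => (t x).image fun y => (x, y)).card : ℕ) : ℝ)
        ≤ ((∑ x ∈ s, ((t x).image fun y => (x, y)).card : ℕ) : ℝ) := by
          exact_mod_cast Finset.card_biUnion_le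
      _ ≤ ∑ x ∈ s, (4 * M₁) := by
          push_cast
          apply Finset.sum_le_sum
          intro x _
          refine le_trans ?_ (ht x)
          exact_mod_cast Finset.card_image_le
      _ = s.card * (4 * M₁) := by simp
      _ ≤ (4 * ((M₁ + M₂) / |d₁ - d₂|)) * (4 * M₁) := by gcongr
      _ ≤ (4 * ((M₂ + M₂) / |d₁ - d₂|)) * (4 * M₁) := by gcongr
      _ = _ := by ring
  · intro x y hx hy
    simp only [Finset.mem_biUnion, Finset.mem_image, Prod.mk.injEq]
    refine ⟨x, hs' x ?_, y, ht' x y hx, rfl, rfl⟩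
    rw [le_div_iff₀ hD, ← abs_mul, add_mul, div_mul_cancel₀ _ (sub_ne_zero.mpr hd)]
    calc _ = |((y : ℝ) + (x * d₁ + c₁)) - ((y : ℝ) + (x * d₂ + c₂))| := by
          congr 1; ring
      _ ≤ _ := (abs_sub _ _).trans (add_le_add hx hy)

open Polynomial in
/-- The part of a monic polynomial of degree `m + 2` without the two lowest terms. -/
noncomputable def auxPoly (m : ℕ) (b : Fin m → ℤ) : ℤ[X] :=
  X ^ (m + 2) + ∑ i : Fin m, C (b i) * X ^ ((i : ℕ) + 2)

open Polynomial in
lemma auxPoly_eq (m : ℕ) (P : ℤ[X]) (hm : P.Monic) (hd : P.natDegree = m + 2) :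
    P = auxPoly m (fun i => P.coeff (i + 2)) + C (P.coeff 1) * X + C (P.coeff 0) := by
  conv_lhs => rw [hm.as_sum, hd, Finset.sum_range_succ', Finset.sum_range_succ']
  rw [auxPoly, Fin.sum_univ_eq_sum_range (fun i => C (P.coeff (i + 2)) * X ^ (i + 2))]
  simp [add_assoc]

open Polynomial in
lemma auxPoly_natDegree (m : ℕ) (b : Fin m → ℤ) (x y : ℤ) :
    (auxPoly m b + C x * X + C y).natDegree ≤ m + 2 := by
  unfold auxPoly
  refine natDegree_add_le_of_degree_le (natDegree_add_le_of_degree_le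
    (natDegree_add_le_of_degree_le (natDegree_X_pow_le _) ?_) ?_) ?_
  · apply natDegree_sum_le_of_forall_le
    intro i _
    refine (natDegree_C_mul_X_pow_le _ _).trans ?_
    have := i.2
    omega
  · exact (natDegree_C_mul_le _ _).trans (natDegree_X_le.trans (by omega))
  · simp

open Polynomial in
/-- The main count. -/
lemma aux_count (m : ℕ) (Q d₁ d₂ δ₁ δ₂ M₁ M₂ : ℝ) (hQ : 1 ≤ Q) (hd : d₁ ≠ d₂)
    (hd₁ : d₁ ≠ 0) (hd₂ : d₂ ≠ 0) (hδ₁ : δ₁ ≤ 1) (hδ₂ : δ₂ ≤ 1)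
    (hM₁ : M₁ = ((m + 2 : ℕ) : ℝ) * (((|d₁| + 1) ^ (m + 2 + 1) - 1) / |d₁|) * Q * δ₁)
    (hM₂ : M₂ = ((m + 2 : ℕ) : ℝ) * (((|d₂| + 1) ^ (m + 2 + 1) - 1) / |d₂|) * Q * δ₂)
    (h₁ : 1 / 2 ≤ M₁) (h₂ : 1 / 2 ≤ M₂) (h₃ : |d₁ - d₂| / 2 ≤ M₁ + M₂) :
    ({α : ℝ × ℝ | IsAlgebraicIntegerPoint (m + 2) Q α ∧
          α.1 ∈ Set.Icc (d₁ - δ₁) (d₁ + δ₁) ∧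
          α.2 ∈ Set.Icc (d₂ - δ₂) (d₂ + δ₂)}.ncard : ℝ) ≤
      (4 * Q) ^ m * ((32 * (M₁ * M₂) / |d₁ - d₂|) * ((m + 2 : ℕ) : ℝ) ^ 2) := by
  classical
  choose G hG hG' using fun b : Fin m → ℤ =>
    aux_lattice d₁ d₂ (aeval d₁ (auxPoly m b)) (aeval d₂ (auxPoly m b)) M₁ M₂ hd h₁ h₂ h₃
  obtain ⟨I, hI, hI'⟩ := aux_interval 0 Q (by linarith)
  let R : (Fin m → ℤ) → ℤ × ℤ → Finset ℝ := fun b z =>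
    ((auxPoly m b + C z.1 * X + C z.2).aroots ℝ).toFinset
  have hR : ∀ b z, (R b z).card ≤ m + 2 := by
    intro b z
    refine (Multiset.toFinset_card_le _).trans ((card_roots' _).trans ?_)
    exact natDegree_map_le.trans (auxPoly_natDegree m b z.1 z.2)
  let B : Finset (Fin m → ℤ) := Fintype.piFinset fun _ => I
  let F : Finset (ℝ × ℝ) := B.biUnion fun b => (G b).biUnion fun z => R b z ×ˢ R b z
  have hsub : {α : ℝ × ℝ | IsAlgebraicIntegerPoint (m + 2) Q α ∧
          α.1 ∈ Set.Icc (d₁ - δ₁) (d₁ + δ₁) ∧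
          α.2 ∈ Set.Icc (d₂ - δ₂) (d₂ + δ₂)} ⊆ (F : Set (ℝ × ℝ)) := by
    rintro ⟨α₁, α₂⟩ ⟨⟨P, hm, hirr, hdeg, hc, hr₁, hr₂⟩, ha₁, ha₂⟩
    simp only at hr₁ hr₂ ha₁ ha₂
    have hv₁ := aux_value_bound (m + 2) Q d₁ α₁ δ₁ hd₁ hδ₁ P hdeg hc hr₁
      (by rw [abs_le]; constructor <;> linarith [ha₁.1, ha₁.2])
    have hv₂ := aux_value_bound (m + 2) Q d₂ α₂ δ₂ hd₂ hδ₂ P hdeg hc hr₂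
      (by rw [abs_le]; constructor <;> linarith [ha₂.1, ha₂.2])
    rw [← hM₁] at hv₁
    rw [← hM₂] at hv₂
    have hPeq := auxPoly_eq m P hm hdeg
    set b : Fin m → ℤ := fun i => P.coeff (i + 2) with hb
    have hval : ∀ t : ℝ, aeval t P =
        (P.coeff 0 : ℝ) + (P.coeff 1 * t + aeval t (auxPoly m b)) := by
      intro t
      conv_lhs => rw [hPeq]
      simp
      ring
    rw [hval] at hv₁ hv₂
    have hP0 : P ≠ 0 := hm.ne_zero
    have hRm : ∀ t : ℝ, aeval t P = 0 → t ∈ R b (P.coeff 1, P.coeff 0) := by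
      intro t ht
      simp only [R, ← hPeq, Multiset.mem_toFinset, mem_aroots]
      exact ⟨hP0, ht⟩
    simp only [F, Finset.coe_biUnion, Set.mem_iUnion, Finset.mem_coe, Finset.mem_product]
    refine ⟨b, ?_, (P.coeff 1, P.coeff 0), hG' b _ _ hv₁ hv₂, hRm _ hr₁, hRm _ hr₂⟩
    simp only [B, Fintype.mem_piFinset]
    intro i
    apply hI'
    simpa [hb] using hc (i + 2)
  have hcard : (F.card : ℝ) ≤
      (4 * Q) ^ m * ((32 * (M₁ * M₂) / |d₁ - d₂|) * ((m + 2 : ℕ) : ℝ) ^ 2) := by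
    have hinner : ∀ b, ((((G b).biUnion fun z => R b z ×ˢ R b z).card : ℕ) : ℝ) ≤
        (32 * (M₁ * M₂) / |d₁ - d₂|) * ((m + 2 : ℕ) : ℝ) ^ 2 := by
      intro b
      have := Finset.card_biUnion_le_card_mul (G b) (fun z => R b z ×ˢ R b z) ((m + 2) ^ 2)
        (by
          intro z _
          rw [Finset.card_product, sq]
          exact Nat.mul_le_mul (hR b z) (hR b z))
      calc _ ≤ (((G b).card * (m + 2) ^ 2 : ℕ) : ℝ) := by exact_mod_cast this
        _ = (G b).card * ((m + 2 : ℕ) : ℝ) ^ 2 := by push_cast; ring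
        _ ≤ _ := by gcongr; exact hG b
    have hK : 0 ≤ (32 * (M₁ * M₂) / |d₁ - d₂|) * ((m + 2 : ℕ) : ℝ) ^ 2 := by
      have : 0 ≤ M₁ := by linarith
      have : 0 ≤ M₂ := by linarith
      positivity
    calc (F.card : ℝ) ≤ ((∑ b ∈ B, ((G b).biUnion fun z => R b z ×ˢ R b z).card : ℕ) : ℝ) := by
          exact_mod_cast Finset.card_biUnion_le
      _ ≤ ∑ b ∈ B, (32 * (M₁ * M₂) / |d₁ - d₂|) * ((m + 2 : ℕ) : ℝ) ^ 2 := by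
          push_cast
          apply Finset.sum_le_sum
          intro b _
          exact_mod_cast hinner b
      _ = B.card * ((32 * (M₁ * M₂) / |d₁ - d₂|) * ((m + 2 : ℕ) : ℝ) ^ 2) := by simp
      _ ≤ _ := by
          apply mul_le_mul_of_nonneg_right _ hK
          simp only [B, Fintype.card_piFinset, Finset.prod_const, Finset.card_univ,
            Fintype.card_fin]
          push_cast
          gcongr
  refine le_trans ?_ hcard
  have := Set.ncard_le_ncard hsub F.finite_toSet
  rw [Set.ncard_coe_finset] at this
  exact_mod_cast this

lemma aux_numeric (m : ℕ) : ((m + 2 : ℕ) : ℝ) ^ 2 < 2 ^ (m + 11) := by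
  have : (m + 2) ^ 2 + 2 * (m + 2) + 3 ≤ 2 ^ (m + 11) := by
    induction m with
    | zero => norm_num
    | succ k ih =>
      have : 2 ^ (k + 1 + 11) = 2 * 2 ^ (k + 11) := by ring
      rw [this]
      nlinarith
  have h2 : (m + 2) ^ 2 < 2 ^ (m + 11) := by omega
  exact_mod_cast h2

lemma aux_rho_pos (n : ℕ) (d : ℝ) (hd : d ≠ 0) : 0 < ((|d| + 1) ^ (n + 1) - 1) / |d| := by
  have h : 0 < |d| := abs_pos.mpr hd
  have : 1 < (|d| + 1) ^ (n + 1) := one_lt_pow₀ (by linarith) (by omega)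
  apply div_pos (by linarith) h

open Filter in
lemma aux_eventually (γ c A L : ℝ) (h0 : 0 < γ) (h1 : γ < 1) (hA : 0 < A) (hc : 0 < c) :
    ∀ᶠ Q : ℝ in atTop, c * Q ^ (-γ) / 2 ≤ 1 ∧ L ≤ A * Q * (c * Q ^ (-γ) / 2) := by
  have t1 : Tendsto (fun Q : ℝ => c * Q ^ (-γ) / 2) atTop (nhds 0) := by
    have := ((tendsto_rpow_neg_atTop h0).const_mul c).div_const 2
    simpa using this
  have t2 : Tendsto (fun Q : ℝ => (A * c / 2) * Q ^ (1 - γ)) atTop atTop :=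
    (tendsto_rpow_atTop (by linarith)).const_mul_atTop (by positivity)
  filter_upwards [t1.eventually_le_const one_pos, t2.eventually_ge_atTop L,
    eventually_gt_atTop 0] with Q q1 q2 q3
  refine ⟨q1, q2.trans (le_of_eq ?_)⟩
  rw [sub_eq_add_neg, Real.rpow_add q3, Real.rpow_one]
  ring

/-- **Theorem 2.** Let `n ≥ 2`, `0 < γ₁, γ₂ < 1`, and let `Π = I₁ × I₂` be a
rectangle with midpoint `(d₁, d₂)`, `d₁ ≠ d₂`, and side lengths `c₆ Q^{-γᵢ}`. With
`c₇ = 2^{3n+8} n² ρₙ(d₁) ρₙ(d₂) |d₁ - d₂|⁻¹` and `ρₙ(x) = ((|x|+1)^{n+1} - 1)/|x|`,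
for all sufficiently large `Q` one has `#(Ã²ₙ(Q) ∩ Π) < c₇ · Qⁿ · μ₂Π`,
where `μ₂Π = c₆² Q^{-γ₁-γ₂}`. -/
theorem count_alg_integer_points_in_rectangle_upper
    (n : ℕ) (hn : 2 ≤ n) (γ₁ γ₂ : ℝ) (hγ₁ : 0 < γ₁) (hγ₁' : γ₁ < 1)
    (hγ₂ : 0 < γ₂) (hγ₂' : γ₂ < 1)
    (d₁ d₂ : ℝ) (hd : d₁ ≠ d₂) (hd₁ : d₁ ≠ 0) (hd₂ : d₂ ≠ 0)
    (c₆ : ℝ) (hc₆ : 0 < c₆)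
    (ρ : ℝ → ℝ) (hρ : ∀ x, ρ x = ((|x| + 1) ^ (n + 1) - 1) / |x|)
    (c₇ : ℝ) (hc₇ : c₇ = 2 ^ (3 * n + 8) * n ^ 2 * ρ d₁ * ρ d₂ * |d₁ - d₂|⁻¹) :
    ∃ Q₀ : ℝ, ∀ Q : ℝ, Q₀ < Q →
      ({α : ℝ × ℝ | IsAlgebraicIntegerPoint n Q α ∧
          α.1 ∈ Set.Icc (d₁ - c₆ * Q ^ (-γ₁) / 2) (d₁ + c₆ * Q ^ (-γ₁) / 2) ∧
          α.2 ∈ Set.Icc (d₂ - c₆ * Q ^ (-γ₂) / 2) (d₂ + c₆ * Q ^ (-γ₂) / 2)}.ncard : ℝ) <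
        c₇ * Q ^ (n : ℝ) * (c₆ ^ 2 * Q ^ (-γ₁ - γ₂)) := by
  obtain ⟨m, rfl⟩ : ∃ m, n = m + 2 := ⟨n - 2, by omega⟩
  have hρ₁ := aux_rho_pos (m + 2) d₁ hd₁
  have hρ₂ := aux_rho_pos (m + 2) d₂ hd₂
  have hn0 : (0 : ℝ) < ((m + 2 : ℕ) : ℝ) := by positivity
  have hD : 0 < |d₁ - d₂| := abs_pos.mpr (sub_ne_zero.mpr hd)
  have ev := ((aux_eventually γ₁ c₆ _ (1 / 2 + |d₁ - d₂| / 2) hγ₁ hγ₁' (mul_pos hn0 hρ₁) hc₆).and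
    (aux_eventually γ₂ c₆ _ (1 / 2) hγ₂ hγ₂' (mul_pos hn0 hρ₂) hc₆)).and
    (Filter.eventually_ge_atTop (1 : ℝ))
  obtain ⟨Q₀, hQ₀⟩ := Filter.eventually_atTop.mp ev
  refine ⟨Q₀, fun Q hQ => ?_⟩
  obtain ⟨⟨⟨a1, a2⟩, b1, b2⟩, hQ1⟩ := hQ₀ Q hQ.le
  have hQpos : 0 < Q := by linarith
  refine lt_of_le_of_lt (aux_count m Q d₁ d₂ _ _ _ _ hQ1 hd hd₁ hd₂ a1 b1 rfl rfl
    (by linarith) (by linarith) (by linarith)) ?_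
  rw [hc₇, hρ, hρ, Real.rpow_natCast, sub_eq_add_neg (-γ₁) γ₂, Real.rpow_add hQpos]
  have hq1 : 0 < Q ^ (-γ₁) := Real.rpow_pos_of_pos hQpos _
  have hq2 : 0 < Q ^ (-γ₂) := Real.rpow_pos_of_pos hQpos _
  have hnum := aux_numeric m
  generalize Q ^ (-γ₁) = q₁ at *
  generalize Q ^ (-γ₂) = q₂ at *
  generalize ((|d₁| + 1) ^ (m + 2 + 1) - 1) / |d₁| = r₁ at *
  generalize ((|d₂| + 1) ^ (m + 2 + 1) - 1) / |d₂| = r₂ at *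
  generalize ((m + 2 : ℕ) : ℝ) = N at *
  generalize |d₁ - d₂| = D at *
  have hK : 0 < 8 * 4 ^ m * N ^ 2 * (r₁ * r₂ * Q ^ (m + 2) * c₆ ^ 2 * q₁ * q₂ * D⁻¹) := by
    positivity
  have h4 : (2 : ℝ) ^ (3 * (m + 2) + 8) = 2 ^ (m + 11) * (8 * 4 ^ m) := by
    rw [show (4 : ℝ) = 2 ^ 2 by norm_num, ← pow_mul]
    ring
  rw [h4]
  calc _ = N ^ 2 * (8 * 4 ^ m * N ^ 2 * (r₁ * r₂ * Q ^ (m + 2) * c₆ ^ 2 * q₁ * q₂ * D⁻¹)) := by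
        rw [mul_pow]; ring
    _ < 2 ^ (m + 11) * (8 * 4 ^ m * N ^ 2 * (r₁ * r₂ * Q ^ (m + 2) * c₆ ^ 2 * q₁ * q₂ * D⁻¹)) :=
        mul_lt_mul_of_pos_right hnum hK
    _ = _ := by ring
end

section
/- Let p be a prime number and let a₁, …, aₙ be integers such that p does not divide a_j for at least one index j. Then for any real numbers θ₁, …, θₙ there exist integers s₁, …, sₙ with |θᵢ − sᵢ| ≤ 1 for all i, such that p does not divide s₁a₁ + … + sₙaₙ. -/
/-- Let `p` be a prime and `a₁, …, aₙ` integers with `p ∤ aⱼ` for some `j`.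
Then for any reals `θ₁, …, θₙ` there are integers `s₁, …, sₙ` with `|θᵢ - sᵢ| ≤ 1` for all `i`
such that `p ∤ s₁ a₁ + … + sₙ aₙ`. -/
theorem exists_integer_approx_not_dvd
    (p : ℕ) (hp : p.Prime) (n : ℕ) (a : Fin n → ℤ)
    (ha : ∃ j, ¬ (p : ℤ) ∣ a j) (θ : Fin n → ℝ) :
    ∃ s : Fin n → ℤ, (∀ i, |θ i - (s i : ℝ)| ≤ 1) ∧
      ¬ (p : ℤ) ∣ ∑ i, s i * a i := by
  obtain ⟨j, hj⟩ := ha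
  by_cases h : (p : ℤ) ∣ ∑ i, ⌊θ i⌋ * a i
  · refine ⟨fun i => ⌊θ i⌋ + if i = j then 1 else 0, fun i => ?_, fun h2 => hj ?_⟩
    · have h1 := Int.floor_le (θ i)
      have h3 := Int.lt_floor_add_one (θ i)
      rw [abs_le]
      beta_reduce
      split_ifs <;> push_cast <;> constructor <;> linarith
    · have e : ∑ i, (⌊θ i⌋ + if i = j then 1 else 0) * a i = ∑ i, ⌊θ i⌋ * a i + a j := by
        simp [add_mul, Finset.sum_add_distrib]
      rw [e] at h2
      exact (dvd_add_right h).mp h2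
  · refine ⟨fun i => ⌊θ i⌋, fun i => ?_, h⟩
    have h1 := Int.floor_le (θ i)
    have h3 := Int.lt_floor_add_one (θ i)
    rw [abs_le]
    constructor <;> linarith
end
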